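/- arXiv:math/0610337 — 2 statements merged into one kernel-verified Lean document; each statement's English description precedes it below -/
import Mathlib

section
/- Let Ω ⊆ ℂ be open and let L : Fin 3 → Fin 3 → Fin 3 → ℝ be real constants, written Lⁱⱼₖ, satisfying Lˡⱼₖ + Lᵏⱼₗ = 0 for all j, k, l ∈ {1,2,3}. Let ψ₁, ψ₂, ψ₃ : Ω → ℂ be (real-)differentiable with ψ₃² = −ψ₁² − ψ₂² on Ω, and suppose ψ₁ and ψ₂ satisfy ∂ψᵢ/∂z̄ + Σ_{j,k=1}^{3} Lⁱⱼₖ · conj(ψⱼ) · ψₖ = 0 on Ω for i = 1, 2. Then for every z ∈ Ω one has ψ₃(z) · ( (∂ψ₃/∂z̄)(z) + Σ_{j,k=1}^{3} L³ⱼₖ · conj(ψⱼ(z)) · ψₖ(z) ) = 0. -/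
/-!
The relation `ψ₁² + ψ₂² + ψ₃² = 0` on the open set `Ω` differentiates to `∑ ψᵢ ∂ψᵢ/∂z̄ = 0`
(`sum_mul_wirtingerBar_eq_zero`), while the antisymmetry of `Lⁱⱼₖ` in `i` and `k` gives
`∑ ψᵢ Lⁱⱼₖ conj(ψⱼ) ψₖ = 0` (`sum_mul_quadratic_eq_zero`). Hence the three equations, weighted by
`ψ₁, ψ₂, ψ₃`, add up to zero; since the first two vanish, so does the third times `ψ₃`.
-/

open Finset Complex

/-- The Wirtinger derivative `∂ψ/∂z̄ = (1/2)(∂ψ/∂u + i ∂ψ/∂v)` of `ψ : ℂ → ℂ` at `z`. -/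
noncomputable def wirtingerBar (ψ : ℂ → ℂ) (z : ℂ) : ℂ :=
  (1 / 2 : ℂ) * (fderiv ℝ ψ z 1 + Complex.I • fderiv ℝ ψ z Complex.I)

/-- Only the values of the `ψ i` near `z` matter, so the relation is assumed just eventually. -/
theorem sum_mul_wirtingerBar_eq_zero (ψ : Fin 3 → ℂ → ℂ) (z : ℂ)
    (hdiff : ∀ i, DifferentiableAt ℝ (ψ i) z)
    (hsq : ∀ᶠ w in nhds z, ψ 0 w ^ 2 + ψ 1 w ^ 2 + ψ 2 w ^ 2 = 0) :
    ψ 0 z * wirtingerBar (ψ 0) z + ψ 1 z * wirtingerBar (ψ 1) z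
      + ψ 2 z * wirtingerBar (ψ 2) z = 0 := by
  have hD := fun i => (hdiff i).hasFDerivAt.pow 2
  have hsum := ((hD 0).add (hD 1)).add (hD 2)
  have hzero : HasFDerivAt (fun w => ψ 0 w ^ 2 + ψ 1 w ^ 2 + ψ 2 w ^ 2) (0 : ℂ →L[ℝ] ℂ) z :=
    (hasFDerivAt_const (0 : ℂ) z).congr_of_eventuallyEq hsq
  have hder := hsum.unique hzero
  have h1 := DFunLike.congr_fun hder 1
  have hI := DFunLike.congr_fun hder Complex.I
  simp at h1 hI
  simp only [wirtingerBar, smul_eq_mul]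
  linear_combination (1 / 4 : ℂ) * h1 + (1 / 4 : ℂ) * Complex.I * hI

theorem sum_mul_quadratic_eq_zero (L : Fin 3 → Fin 3 → Fin 3 → ℝ)
    (hL : ∀ j k l : Fin 3, L l j k + L k j l = 0) (c p : Fin 3 → ℂ) :
    ∑ i, p i * ∑ j, ∑ k, (L i j k : ℂ) * c j * p k = 0 := by
  have hC : ∀ j k l : Fin 3, (L l j k : ℂ) = -(L k j l : ℂ) := fun j k l => by
    exact_mod_cast eq_neg_of_add_eq_zero_left (hL j k l)
  have hdiag : ∀ j k : Fin 3, (L k j k : ℂ) = 0 := fun j k => self_eq_neg.mp (hC j k k)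
  simp only [Fin.sum_univ_three, hdiag, hC _ 1 0, hC _ 2 0, hC _ 2 1]
  ring

/-- If the constants `Lⁱⱼₖ` satisfy `Lˡⱼₖ + Lᵏⱼₗ = 0`, the functions `ψ₁, ψ₂, ψ₃` are
real-differentiable on an open `Ω` with `ψ₃² = -ψ₁² - ψ₂²`, and `ψ₁, ψ₂` satisfy the first two
holomorphicity equations, then `ψ₃ (∂ψ₃/∂z̄ + Σ_{j,k} L³ⱼₖ conj(ψⱼ) ψₖ) = 0` on `Ω`. -/
theorem stmt_3 (Ω : Set ℂ) (hΩ : IsOpen Ω) (L : Fin 3 → Fin 3 → Fin 3 → ℝ)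
    (hL : ∀ j k l : Fin 3, L l j k + L k j l = 0)
    (ψ : Fin 3 → ℂ → ℂ)
    (hdiff : ∀ i : Fin 3, ∀ z ∈ Ω, DifferentiableAt ℝ (ψ i) z)
    (hsq : ∀ z ∈ Ω, (ψ 2 z) ^ 2 = -(ψ 0 z) ^ 2 - (ψ 1 z) ^ 2)
    (heq0 : ∀ z ∈ Ω, wirtingerBar (ψ 0) z
      + ∑ j : Fin 3, ∑ k : Fin 3, (L 0 j k : ℂ) * (starRingEnd ℂ) (ψ j z) * ψ k z = 0)
    (heq1 : ∀ z ∈ Ω, wirtingerBar (ψ 1) z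
      + ∑ j : Fin 3, ∑ k : Fin 3, (L 1 j k : ℂ) * (starRingEnd ℂ) (ψ j z) * ψ k z = 0) :
    ∀ z ∈ Ω, ψ 2 z * (wirtingerBar (ψ 2) z
      + ∑ j : Fin 3, ∑ k : Fin 3, (L 2 j k : ℂ) * (starRingEnd ℂ) (ψ j z) * ψ k z) = 0 := by
  intro z hz
  have hw := sum_mul_wirtingerBar_eq_zero ψ z (fun i => hdiff i z hz) (by
    filter_upwards [hΩ.mem_nhds hz] with w hw
    linear_combination hsq w hw)
  have hq := sum_mul_quadratic_eq_zero L hL (fun j => (starRingEnd ℂ) (ψ j z)) (fun k => ψ k z)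
  rw [Fin.sum_univ_three] at hq
  linear_combination hw + hq - ψ 0 z * heq0 z hz - ψ 1 z * heq1 z hz
end

section
/- Let Ω ⊆ ℂ be a simply connected open set and let φ : Ω → ℂ be continuously differentiable (in the real sense) with (∂φ/∂z̄)(z) real for every z ∈ Ω. Then there exists a continuously differentiable function f : Ω → ℝ such that for all z ∈ Ω, fderiv ℝ f z 1 = 2 Re φ(z) and fderiv ℝ f z I = −2 Im φ(z); equivalently, f is a primitive of the closed 1-form 2 Re(φ dz), and the ℂ-valued function f satisfies ∂f/∂z := (1/2)(∂f/∂u − i ∂f/∂v) = φ on Ω. -/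
/-!
Put `ω z w = 2 Re (φ z * w)`, the 1-form `2 Re (φ dz)`. Its exterior derivative is a multiple of
`Im ∂φ/∂z̄`, so `ω` is closed, and the Poincaré lemma on convex sets provides a primitive of `ω` on
a ball around each point of `Ω`. Two such primitives differ by a locally constant function, so the
germs of primitives form a covering space of `Ω` with fibre `ℝ` (discrete). As `Ω` is simply
connected and locally path connected, the identity of `Ω` lifts to this covering, and the resulting
section is a global primitive; this gluing step is `exists_glue_locally_constant`, and
`exists_primitive_of_closed` is the ensuing Poincaré lemma on simply connected open sets.
-/

open Set Filter Topology

/-- Gluing over a simply connected space: if the local functions `g i`, defined on open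
neighbourhoods `U i` of `i`, differ from each other by locally constant functions, then some global
function differs from each of them by a locally constant function. It is obtained from a section of
the covering space with discrete fibre `A` and transition functions `g i - g j`. -/
theorem exists_glue_locally_constant {X A : Type*} [TopologicalSpace X] [SimplyConnectedSpace X]
    [LocallyPathConnectedSpace X] [AddCommGroup A] (U : X → Set X) (hU : ∀ i, IsOpen (U i))
    (hmem : ∀ i, i ∈ U i) (g : X → X → A)
    (hg : ∀ i j, ∀ x ∈ U i ∩ U j, ∀ᶠ y in 𝓝 x, g j y - g i y = g j x - g i x) :
    ∃ f : X → A, ∀ x, ∀ᶠ y in 𝓝 x, f y - g x y = f x - g x x := by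
  let _ : TopologicalSpace A := ⊥
  have : DiscreteTopology A := ⟨rfl⟩
  let Z : FiberBundleCore X X A :=
    { baseSet := U
      isOpen_baseSet := hU
      indexAt := id
      mem_baseSet_at := hmem
      coordChange := fun i j x v => v + (g i x - g j x)
      coordChange_self := by simp
      continuousOn_coordChange := by
        rintro i j ⟨x, v⟩ ⟨hx, -⟩
        refine ContinuousAt.continuousWithinAt ?_
        have hc : ContinuousAt (fun p : X × A => p.2 + (g i x - g j x)) (x, v) :=
          (continuous_of_discreteTopology (f := fun a : A => a + (g i x - g j x))).continuousAt.comp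
            continuousAt_snd
        refine hc.congr ?_
        have h1 : ∀ᶠ p : X × A in 𝓝 (x, v), g i p.1 - g j p.1 = g i x - g j x :=
          (continuousAt_fst (p := (x, v))).eventually (hg j i x ⟨hx.2, hx.1⟩)
        filter_upwards [h1] with p hp
        rw [hp]
      coordChange_comp := by
        intro i j k x _ v
        abel }
  have hcov : IsCoveringMap (Bundle.TotalSpace.proj (F := A) (E := Z.Fiber)) :=
    FiberBundle.isCoveringMap
  obtain ⟨x₀⟩ : Nonempty X := inferInstance
  obtain ⟨s, ⟨-, hs⟩, -⟩ := hcov.existsUnique_continuousMap_lifts (ContinuousMap.id X) x₀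
    (⟨x₀, (0 : A)⟩ : Bundle.TotalSpace A Z.Fiber) rfl
  have hs' : ∀ x, (s x).proj = x := fun x => congrFun hs x
  let c : X → A := fun y => (s y).snd
  refine ⟨fun y => g y y + c y, fun x => ?_⟩
  -- The fibre coordinate of the section over `U x` is `f - g x`; continuity into a discrete
  -- space makes it locally constant.
  have hcont : ContinuousAt (fun y => (Z.localTriv x (s y)).2) x := by
    have hsrc : s x ∈ (Z.localTriv x).source := by
      rw [Z.mem_localTriv_source, hs' x]
      exact hmem x
    exact continuousAt_snd.comp
      (((Z.localTriv x).continuousAt hsrc).comp (map_continuous s).continuousAt)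
  have hval : ∀ y, (Z.localTriv x (s y)).2 = c y + (g y y - g x y) := by
    intro y
    change c y + (g (s y).proj (s y).proj - g x (s y).proj) = _
    rw [hs' y]
  have hev : ∀ᶠ y in 𝓝 x, (Z.localTriv x (s y)).2 = (Z.localTriv x (s x)).2 :=
    hcont.eventually (p := fun a => a = (Z.localTriv x (s x)).2) (by simp [nhds_discrete])
  filter_upwards [hev] with y hy
  rw [hval, hval] at hy
  calc g y y + c y - g x y = c y + (g y y - g x y) := by abel
    _ = c x + (g x x - g x x) := hy
    _ = g x x + c x - g x x := by abel

/-- The Poincaré lemma for 1-forms on simply connected open sets. -/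
theorem exists_primitive_of_closed {E : Type*} [NormedAddCommGroup E] [NormedSpace ℝ E]
    {Ω : Set E} (hΩ : IsOpen Ω) (hsc : SimplyConnectedSpace Ω) {ω : E → E →L[ℝ] ℝ}
    (hω : DifferentiableOn ℝ ω Ω)
    (hdω : ∀ a ∈ Ω, ∀ x y, fderiv ℝ ω a x y = fderiv ℝ ω a y x) :
    ∃ f : E → ℝ, ∀ a ∈ Ω, HasFDerivAt f (ω a) a := by
  classical
  have := hΩ.locallyPathConnectedSpace
  have hloc : ∀ i : Ω, ∃ r > 0, Metric.ball (i : E) r ⊆ Ω ∧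
      ∃ g : E → ℝ, ∀ a ∈ Metric.ball (i : E) r, HasFDerivAt g (ω a) a := by
    intro i
    obtain ⟨r, hr, hsub⟩ := Metric.isOpen_iff.1 hΩ i i.2
    exact ⟨r, hr, hsub, (convex_ball _ _).exists_forall_hasFDerivAt_of_fderiv_symmetric
      Metric.isOpen_ball (hω.mono hsub) fun a ha => hdω a (hsub ha)⟩
  choose r hr hsub g hg using hloc
  obtain ⟨f, hf⟩ := exists_glue_locally_constant (X := Ω) (A := ℝ)
    (fun i => Subtype.val ⁻¹' Metric.ball (i : E) (r i))
    (fun i => Metric.isOpen_ball.preimage continuous_subtype_val)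
    (fun i => Metric.mem_ball_self (hr i)) (fun i y => g i y) (by
      rintro i j x ⟨hxi, hxj⟩
      obtain ⟨ε, hε, hball⟩ := Metric.isOpen_iff.1
        (Metric.isOpen_ball.inter Metric.isOpen_ball) (x : E) ⟨hxi, hxj⟩
      have hd : ∀ y ∈ Metric.ball (x : E) ε, HasFDerivAt (𝕜 := ℝ) (fun y => g j y - g i y) 0 y := by
        intro y hy
        simpa using (hg j y (hball hy).2).fun_sub (hg i y (hball hy).1)
      have hev : ∀ᶠ y : Ω in 𝓝 x, (y : E) ∈ Metric.ball (x : E) ε :=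
        continuous_subtype_val.continuousAt.eventually (Metric.ball_mem_nhds _ hε)
      filter_upwards [hev] with y hy
      refine (convex_ball (x : E) ε).is_const_of_fderivWithin_eq_zero (𝕜 := ℝ)
        (f := fun y => g j y - g i y)
        (fun z hz => (hd z hz).differentiableAt.differentiableWithinAt) (fun z hz => ?_) hy
        (Metric.mem_ball_self hε)
      rw [fderivWithin_of_isOpen Metric.isOpen_ball hz, (hd z hz).fderiv])
  refine ⟨fun z => if hz : z ∈ Ω then f ⟨z, hz⟩ else 0, fun a ha => ?_⟩
  have hga := (hg ⟨a, ha⟩ a (Metric.mem_ball_self (hr ⟨a, ha⟩))).add_const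
    (f ⟨a, ha⟩ - g ⟨a, ha⟩ a)
  refine hga.congr_of_eventuallyEq ?_
  have hev := hf ⟨a, ha⟩
  rw [nhds_subtype_eq_comap, eventually_comap] at hev
  filter_upwards [hev, hΩ.mem_nhds ha] with z hz hzΩ
  have h1 := hz ⟨z, hzΩ⟩ rfl
  simp only [hzΩ, dif_pos]
  linarith

open Complex

/-- On a simply connected open set `Ω ⊆ ℂ`, if `φ : ℂ → ℂ` is `C¹` (in the real sense) with
`∂φ/∂z̄` real everywhere on `Ω`, then there is a `C¹` function `f : Ω → ℝ` with
`∂f/∂u = 2 Re φ` and `∂f/∂v = -2 Im φ` on `Ω`; equivalently `f` is a primitive of the closed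
1-form `2 Re(φ dz)` and satisfies `∂f/∂z = φ`. -/
theorem stmt_9 (Ω : Set ℂ) (hΩ : IsOpen Ω) (hsc : SimplyConnectedSpace Ω)
    (φ : ℂ → ℂ) (hφ : ContDiffOn ℝ 1 φ Ω)
    (hreal : ∀ z ∈ Ω,
      ((1 / 2 : ℂ) * (fderiv ℝ φ z 1 + Complex.I • fderiv ℝ φ z Complex.I)).im = 0) :
    ∃ f : ℂ → ℝ, ContDiffOn ℝ 1 f Ω ∧ ∀ z ∈ Ω,
      fderiv ℝ f z 1 = 2 * (φ z).re
      ∧ fderiv ℝ f z Complex.I = -2 * (φ z).im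
      ∧ (1 / 2 : ℂ) * ((fderiv ℝ f z 1 : ℂ) - Complex.I * (fderiv ℝ f z Complex.I : ℂ))
          = φ z := by
  let L : ℂ →L[ℝ] ℂ →L[ℝ] ℝ :=
    (2 : ℝ) • (ContinuousLinearMap.compL ℝ ℂ ℂ ℝ reCLM).comp (ContinuousLinearMap.mul ℝ ℂ)
  have hL : ∀ a b : ℂ, L a b = 2 * (a * b).re := fun a b => by simp [L]
  have hd : DifferentiableOn ℝ φ Ω := hφ.differentiableOn (by simp)
  have hω : ContDiffOn ℝ 1 (fun z => L (φ z)) Ω := L.contDiff.comp_contDiffOn hφ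
  obtain ⟨f, hf⟩ := exists_primitive_of_closed hΩ hsc (ω := fun z => L (φ z))
    (hω.differentiableOn (by simp)) (by
      intro a ha x y
      have hda := (hd.differentiableAt (hΩ.mem_nhds ha)).hasFDerivAt
      rw [(show HasFDerivAt (fun z => L (φ z)) _ a from L.hasFDerivAt.comp a hda).fderiv]
      have hexp : ∀ w : ℂ, fderiv ℝ φ a w
          = (w.re : ℂ) * fderiv ℝ φ a 1 + (w.im : ℂ) * fderiv ℝ φ a I := by
        intro w
        conv_lhs => rw [show w = w.re • (1 : ℂ) + w.im • I by simp [Complex.re_add_im]]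
        rw [map_add, map_smul, map_smul, real_smul, real_smul]
      have hr : (fderiv ℝ φ a 1).im + (fderiv ℝ φ a I).re = 0 := by
        have := hreal a ha
        simpa using this
      simp only [ContinuousLinearMap.comp_apply, hL]
      rw [hexp x, hexp y]
      simp only [mul_re, add_re, add_im, mul_im, ofReal_re, ofReal_im]
      linear_combination 2 * (x.im * y.re - x.re * y.im) * hr)
  have h1 : ∀ z ∈ Ω, fderiv ℝ f z 1 = 2 * (φ z).re := fun z hz => by
    rw [(hf z hz).fderiv, hL, mul_one]
  have hI : ∀ z ∈ Ω, fderiv ℝ f z I = -2 * (φ z).im := fun z hz => by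
    rw [(hf z hz).fderiv, hL]
    simp
  refine ⟨f, ?_, fun z hz => ⟨h1 z hz, hI z hz, ?_⟩⟩
  · rw [show (1 : WithTop ℕ∞) = 0 + 1 by simp, contDiffOn_succ_iff_fderiv_of_isOpen hΩ]
    refine ⟨fun z hz => (hf z hz).differentiableAt.differentiableWithinAt, by simp, ?_⟩
    exact (hω.of_le (by simp)).congr fun z hz => (hf z hz).fderiv
  · rw [h1 z hz, hI z hz]
    apply Complex.ext <;> simp
end
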